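/- arXiv:2007.12267 — 3 statements merged into one kernel-verified Lean document; each statement's English description precedes it below -/
import Mathlib

section
/- Let n ≥ 2 and k₀ ≥ 1 be integers and d a rational number. For 1 ≤ i ≤ n set bᵢ := k₀+i, dᵢ := (1/(n−1)!)·Π_{j≠i}(k₀+j), and x̄ᵢ := (−1)^{i−1}·binom(n−1, i−1)·(dᵢ − d). Then: (i) Σ_{i=1}^{n} x̄ᵢ = 1; (ii) Σ_{i=1}^{n} x̄ᵢ·(bᵢ)^p = 0 for every integer p with 1 ≤ p ≤ n−2; (iii) Σ_{i=1}^{n} x̄ᵢ·(bᵢ)^{n−1} = (−1)^n·(n−1)!·d. -/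
/-- The rational number `dᵢ := (1/(n−1)!)·Π_{1 ≤ j ≤ n, j ≠ i} (k₀+j)`. -/
def dQ (n k₀ i : ℕ) : ℚ :=
  (1 / (n - 1).factorial) * ∏ j ∈ (Finset.Icc 1 n).erase i, ((k₀ : ℚ) + j)

/-- The explicit solution `x̄ᵢ := (−1)^{i−1}·binom(n−1, i−1)·(dᵢ − d)`
of the Vandermonde system, where `bᵢ := k₀ + i`. -/
def xbar (n k₀ : ℕ) (d : ℚ) (i : ℕ) : ℚ :=
  (-1) ^ (i - 1) * ((n - 1).choose (i - 1) : ℚ) * (dQ n k₀ i - d)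

/-!
The nodes `bᵢ = k₀ + i` are consecutive, so `(-1)^(i-1) * binom(n-1, i-1)` is the barycentric weight
`wᵢ = ∏_{j ≠ i} (bᵢ - bⱼ)⁻¹` up to the factor `(-1)^(n-1) * (n-1)!`. Hence
`(-1)^(i-1) * binom(n-1, i-1) * dᵢ` is the value at `0` of the `i`-th Lagrange basis polynomial, and
for every polynomial `P` of degree less than `n`, Lagrange interpolation evaluates `∑ x̄ᵢ P(bᵢ)` as
`P(0) - (-1)^(n-1) * (n-1)! * d * [X^(n-1)] P`. The system is the case `P = X^p`.
-/

open Finset Polynomial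

section Lagrange

variable {F ι : Type*} [Field F] [DecidableEq ι] {s : Finset ι} {v : ι → F} {i : ι} {P : F[X]}

lemma sum_eval_basis_mul_eval (hvs : Set.InjOn v s) (hP : P.degree < #s) (x : F) :
    ∑ i ∈ s, (Lagrange.basis s v i).eval x * P.eval (v i) = P.eval x := by
  conv_rhs => rw [Lagrange.eq_interpolate hvs hP]
  simp [Lagrange.interpolate_apply, eval_finsetSum, mul_comm]

lemma sum_nodalWeight_mul_eval (hvs : Set.InjOn v s) (hP : P.degree < #s) :
    ∑ i ∈ s, Lagrange.nodalWeight s v i * P.eval (v i) = P.coeff (#s - 1) := by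
  simp only [Lagrange.coeff_eq_sum hvs hP, Lagrange.nodalWeight, prod_inv_distrib, div_eq_inv_mul]

lemma eval_zero_basis (hi : i ∈ s) :
    (Lagrange.basis s v i).eval 0 =
      (-1) ^ (#s - 1) * Lagrange.nodalWeight s v i * ∏ j ∈ s.erase i, v j := by
  rw [Lagrange.basis_eq_prod_sub_inv_mul_nodal_div hi, ← Lagrange.nodal_erase_eq_nodal_div hi,
    eval_mul, eval_C, Lagrange.eval_nodal]
  simp only [zero_sub, prod_neg, card_erase_of_mem hi]
  ring

end Lagrange

section ConsecutiveNodes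

variable {R : Type*} [CommRing R] {a b i : ℕ}

lemma prod_Ico_natCast_sub (h : a ≤ i) :
    ∏ j ∈ Ico a i, ((i : R) - j) = (i - a).factorial := by
  rw [prod_Ico_eq_prod_range, ← prod_range_reflect, ← prod_range_add_one_eq_factorial,
    Nat.cast_prod]
  refine prod_congr rfl fun j hj => ?_
  have hji : j < i - a := mem_range.mp hj
  rw [← Nat.cast_sub (by omega)]
  congr 1
  omega

lemma prod_Ioc_natCast_sub :
    ∏ j ∈ Ioc i b, ((i : R) - j) = (-1) ^ (b - i) * (b - i).factorial := by
  have hfactorial : ∏ j ∈ Ioc i b, ((j : R) - i) = (b - i).factorial := by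
    rw [← Ico_add_one_add_one_eq_Ioc, prod_Ico_eq_prod_range, Nat.add_sub_add_right,
      ← prod_range_add_one_eq_factorial, Nat.cast_prod]
    refine prod_congr rfl fun j _ => ?_
    push_cast
    ring
  rw [← hfactorial, ← Nat.card_Ioc, ← prod_neg]
  simp only [neg_sub]

lemma prod_erase_Icc_natCast_sub (hi : i ∈ Icc a b) :
    ∏ j ∈ (Icc a b).erase i, ((i : R) - j) =
      (-1) ^ (b - i) * (i - a).factorial * (b - i).factorial := by
  have hsplit : (Icc a b).erase i = Ico a i ∪ Ioc i b := by grind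
  have hdisj : Disjoint (Ico a i) (Ioc i b) := by
    simp only [disjoint_left, mem_Ico, mem_Ioc]
    omega
  rw [hsplit, prod_union hdisj, prod_Ico_natCast_sub (mem_Icc.mp hi).1, prod_Ioc_natCast_sub]
  ring

variable {K : Type*} [Field K] [CharZero K]

lemma neg_one_pow_mul_choose_eq_nodalWeight (hi : i ∈ Icc a b) (y : K) :
    (-1) ^ (i - a) * ((b - a).choose (i - a) : K) =
      (-1) ^ (b - a) * (b - a).factorial *
        Lagrange.nodalWeight (Icc a b) (fun j => y + j) i := by
  obtain ⟨hai, hib⟩ := mem_Icc.mp hi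
  have hsign : (-1 : K) ^ (b - a) = (-1) ^ (i - a) * (-1) ^ (b - i) := by
    rw [← pow_add]
    congr 1
    omega
  rw [Lagrange.nodalWeight, prod_inv_distrib]
  simp only [add_sub_add_left_eq_sub]
  rw [prod_erase_Icc_natCast_sub hi, Nat.cast_choose K (by omega : i - a ≤ b - a),
    Nat.sub_sub_sub_cancel_right hai, hsign]
  field_simp

end ConsecutiveNodes

lemma xbar_eq_eval_zero_basis_sub {n i : ℕ} (hi : i ∈ Icc 1 n) (k₀ : ℕ) (d : ℚ) :
    xbar n k₀ d i =
      (Lagrange.basis (Icc 1 n) (fun j : ℕ => (k₀ : ℚ) + j) i).eval 0 -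
        (-1) ^ (n - 1) * (n - 1).factorial * d *
          Lagrange.nodalWeight (Icc 1 n) (fun j : ℕ => (k₀ : ℚ) + j) i := by
  rw [xbar, dQ, neg_one_pow_mul_choose_eq_nodalWeight hi (k₀ : ℚ), eval_zero_basis hi,
    Nat.card_Icc, Nat.add_sub_cancel]
  field_simp

lemma sum_xbar_mul_eval {n : ℕ} (k₀ : ℕ) (d : ℚ) {P : ℚ[X]} (hP : P.degree < n) :
    ∑ i ∈ Icc 1 n, xbar n k₀ d i * P.eval ((k₀ : ℚ) + i) =
      P.eval 0 - (-1) ^ (n - 1) * (n - 1).factorial * d * P.coeff (n - 1) := by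
  have hinj : Set.InjOn (fun j : ℕ => (k₀ : ℚ) + j) (Icc 1 n) :=
    ((add_right_injective (k₀ : ℚ)).comp Nat.cast_injective).injOn
  have hcard : #(Icc 1 n) = n := by simp
  have hdeg : P.degree < #(Icc 1 n) := by rwa [hcard]
  have hcoeff := sum_nodalWeight_mul_eval hinj hdeg
  rw [hcard] at hcoeff
  rw [← sum_eval_basis_mul_eval hinj hdeg 0, ← hcoeff, mul_sum, ← sum_sub_distrib]
  refine sum_congr rfl fun i hi => ?_
  rw [xbar_eq_eval_zero_basis_sub hi]
  ring

lemma sum_xbar_mul_pow {n p : ℕ} (k₀ : ℕ) (d : ℚ) (hp : p < n) :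
    ∑ i ∈ Icc 1 n, xbar n k₀ d i * ((k₀ : ℚ) + i) ^ p =
      0 ^ p - (-1) ^ (n - 1) * (n - 1).factorial * d * if n - 1 = p then 1 else 0 := by
  have hdeg : (X ^ p : ℚ[X]).degree < n := by rw [degree_X_pow]; exact_mod_cast hp
  simpa only [eval_pow, eval_X, coeff_X_pow] using sum_xbar_mul_eval k₀ d hdeg

theorem stmt_3 (n k₀ : ℕ) (hn : 2 ≤ n) (hk : 1 ≤ k₀) (d : ℚ) :
    (∑ i ∈ Finset.Icc 1 n, xbar n k₀ d i) = 1 ∧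
    (∀ p : ℕ, 1 ≤ p → p ≤ n - 2 →
      (∑ i ∈ Finset.Icc 1 n, xbar n k₀ d i * ((k₀ : ℚ) + i) ^ p) = 0) ∧
    (∑ i ∈ Finset.Icc 1 n, xbar n k₀ d i * ((k₀ : ℚ) + i) ^ (n - 1))
      = (-1) ^ n * (n - 1).factorial * d := by
  refine ⟨?_, fun p hp hpn => ?_, ?_⟩
  · simpa [show n - 1 ≠ 0 by omega] using sum_xbar_mul_pow k₀ d (show 0 < n by omega)
  · rw [sum_xbar_mul_pow k₀ d (by omega), zero_pow (by omega), if_neg (by omega)]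
    ring
  · obtain ⟨m, rfl⟩ : ∃ m, n = m + 1 := ⟨n - 1, by omega⟩
    rw [sum_xbar_mul_pow k₀ d (by omega), zero_pow (by omega), if_pos rfl, Nat.add_sub_cancel]
    ring
end

section
/- Let n ≥ 3 and k₀ ≥ 1 be integers, let dᵢ := (1/(n−1)!)·Π_{1 ≤ j ≤ n, j ≠ i}(k₀+j) for 1 ≤ i ≤ n, and let d be an integer with c(n,k₀) ≤ d < c(n,k₀+1). Then there exists a unique index i₀ with 1 ≤ i₀ ≤ n−1 such that d_{i₀+1} ≤ d < d_{i₀}. Moreover, defining xᵢ := binom(n−1, i−1)·(dᵢ − d) for 1 ≤ i ≤ i₀ and xᵢ := binom(n−1, i−1)·(d − dᵢ) for i₀ < i ≤ n, every xᵢ is a nonnegative integer, xᵢ > 0 for all 1 ≤ i ≤ i₀, and xᵢ > 0 for all i₀+1 < i ≤ n. -/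
/-- `c n h` is the dimension of the space of homogeneous polynomials of degree `h`
in `n` variables: `c(n,h) = binom(n-1+h, h)`. -/
def c (n h : ℕ) : ℕ := (n - 1 + h).choose h

/-!
Up to a factor independent of `i`, the number `dᵢ` is `1 / (k₀ + i)`: indeed
`(k₀ + i) dᵢ = n · binom(k₀ + n, n)`. Hence the `dᵢ` decrease strictly from `c(n, k₀ + 1)` to
`c(n, k₀)`, and `[dₙ, d₁)` is the disjoint union of the intervals `[dᵢ₊₁, dᵢ)`. Integrality of the
`xᵢ` comes from `binom(n - 1, i - 1) dᵢ = binom(k₀ + n, k₀ + i) · binom(k₀ + i - 1, k₀)`.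
-/

section AntitoneOn

variable {α : Type*} [LinearOrder α] {f : ℕ → α} {m n : ℕ} {x : α}

theorem lt_apply_iff_le_of_antitoneOn_Icc (hf : AntitoneOn f (Set.Icc m n)) {i j : ℕ}
    (hmi : m ≤ i) (hin : i < n) (hle : f (i + 1) ≤ x) (hlt : x < f i) (hj : j ∈ Set.Icc m n) :
    x < f j ↔ j ≤ i := by
  refine ⟨fun hxj => ?_, fun hji => hlt.trans_le (hf hj ⟨hmi, hin.le⟩ hji)⟩
  by_contra! hij
  exact hxj.not_ge ((hf ⟨by lia, hin⟩ hj hij).trans hle)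

theorem exists_apply_succ_le_lt_apply (hmn : m ≤ n) (hx : x ∈ Set.Ico (f n) (f m)) :
    ∃ i, m ≤ i ∧ i < n ∧ f (i + 1) ≤ x ∧ x < f i := by
  have hcover := Ico_subset_biUnion_Ico (n - m) (fun i => f (n - i))
  simp only [Nat.sub_zero, Nat.sub_sub_self hmn] at hcover
  obtain ⟨i, hi, hle, hlt⟩ := Set.mem_iUnion₂.mp (hcover hx)
  have him : i < n - m := Finset.mem_range.mp hi
  refine ⟨n - (i + 1), by lia, by lia, ?_, hlt⟩
  rwa [show n - (i + 1) + 1 = n - i by lia]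

theorem existsUnique_apply_succ_le_lt_apply (hf : AntitoneOn f (Set.Icc m n)) (hmn : m ≤ n)
    (hx : x ∈ Set.Ico (f n) (f m)) :
    ∃! i, m ≤ i ∧ i < n ∧ f (i + 1) ≤ x ∧ x < f i := by
  refine existsUnique_of_exists_of_unique (exists_apply_succ_le_lt_apply hmn hx) ?_
  rintro i j ⟨hmi, hin, hile, hilt⟩ ⟨hmj, hjn, hjle, hjlt⟩
  exact le_antisymm
    ((lt_apply_iff_le_of_antitoneOn_Icc hf hmj hjn hjle hjlt ⟨hmi, hin.le⟩).mp hilt)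
    ((lt_apply_iff_le_of_antitoneOn_Icc hf hmi hin hile hilt ⟨hmj, hjn.le⟩).mp hjlt)

end AntitoneOn

theorem prod_Icc_one_add_eq_factorial_mul_choose (n k : ℕ) :
    ∏ j ∈ Finset.Icc 1 n, (k + j) = n.factorial * (k + n).choose n := by
  rw [← Nat.ascFactorial_eq_factorial_mul_choose, Nat.ascFactorial_eq_prod_range,
    ← Finset.Ico_add_one_right_eq_Icc, Finset.prod_Ico_eq_prod_range]
  simp only [Nat.add_sub_cancel, add_assoc]

theorem choose_mul_succ_mul_choose_succ (k m a : ℕ) :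
    m.choose a * ((m + 1) * (k + (m + 1)).choose (m + 1)) =
      (k + (m + 1)).choose (k + (a + 1)) * (k + a).choose k * (k + (a + 1)) := by
  have htrinomial : (k + (m + 1)).choose (k + (a + 1)) * (k + (a + 1)).choose k =
      (k + (m + 1)).choose k * (m + 1).choose (a + 1) := by
    simpa only [Nat.add_sub_cancel_left] using
      Nat.choose_mul (n := k + (m + 1)) (Nat.le_add_right k (a + 1))
  have habsorb : (k + a).choose k * (k + (a + 1)) = (k + (a + 1)).choose k * (a + 1) := by
    simpa only [add_assoc, Nat.add_sub_cancel_left] using Nat.choose_mul_succ_eq (k + a) k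
  calc m.choose a * ((m + 1) * (k + (m + 1)).choose (m + 1))
      = (k + (m + 1)).choose k * ((m + 1) * m.choose a) := by
        rw [Nat.choose_symm_add]; ring
    _ = (k + (m + 1)).choose k * (m + 1).choose (a + 1) * (a + 1) := by
        rw [Nat.add_one_mul_choose_eq, mul_assoc]
    _ = (k + (m + 1)).choose (k + (a + 1)) * (k + a).choose k * (k + (a + 1)) := by
        rw [← htrinomial, mul_assoc, ← habsorb, mul_assoc]

section dQ

variable {n i : ℕ} (k : ℕ)

theorem dQ_eq_div (hi : i ∈ Finset.Icc 1 n) :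
    dQ n k i = n * (k + n).choose n / (k + i) := by
  obtain ⟨hi_pos, hin⟩ := Finset.mem_Icc.mp hi
  have hprod : ((k : ℚ) + i) * ∏ j ∈ (Finset.Icc 1 n).erase i, ((k : ℚ) + j) =
      n.factorial * (k + n).choose n := by
    rw [Finset.mul_prod_erase _ (fun j : ℕ => (k : ℚ) + j) hi]
    exact_mod_cast prod_Icc_one_add_eq_factorial_mul_choose n k
  have hfactorial : (n.factorial : ℚ) = n * (n - 1).factorial := by
    exact_mod_cast (Nat.mul_factorial_pred (by lia)).symm
  rw [dQ, eq_div_iff (by positivity), mul_assoc, mul_comm _ ((k : ℚ) + i), hprod, hfactorial]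
  field_simp

theorem strictAntiOn_dQ (n : ℕ) : StrictAntiOn (dQ n k) (Set.Icc 1 n) := by
  intro i hi j hj hij
  rw [dQ_eq_div k (Finset.mem_Icc.mpr hi), dQ_eq_div k (Finset.mem_Icc.mpr hj)]
  have : 0 < i := hi.1
  have : 0 < n := hi.1.trans hi.2
  have : 0 < (k + n).choose n := Nat.choose_pos (by lia)
  gcongr

theorem dQ_self (hn : 1 ≤ n) : dQ n k n = c n k := by
  have habsorb : n * (k + n).choose n = (n - 1 + k).choose k * (k + n) := by
    obtain ⟨m, rfl⟩ := Nat.exists_eq_add_of_le' hn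
    rw [Nat.add_sub_cancel, add_comm m k, Nat.choose_symm_add, ← add_assoc,
      mul_comm _ (k + m + 1), Nat.add_one_mul_choose_eq, mul_comm]
  rw [dQ_eq_div k (Finset.mem_Icc.mpr ⟨hn, le_rfl⟩), div_eq_iff (by positivity), c]
  exact_mod_cast habsorb

theorem dQ_one (hn : 1 ≤ n) : dQ n k 1 = c n (k + 1) := by
  have habsorb : n * (k + n).choose n = (n - 1 + (k + 1)).choose (k + 1) * (k + 1) := by
    rw [show n - 1 + (k + 1) = k + n by lia, Nat.choose_succ_right_eq,
      Nat.add_sub_cancel_left, Nat.choose_symm_add, mul_comm]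
  rw [dQ_eq_div k (Finset.mem_Icc.mpr ⟨le_rfl, hn⟩), div_eq_iff (by positivity), c]
  exact_mod_cast habsorb

theorem choose_mul_dQ (hi : i ∈ Finset.Icc 1 n) :
    ((n - 1).choose (i - 1) : ℚ) * dQ n k i =
      ((k + n).choose (k + i) * (k + (i - 1)).choose k : ℕ) := by
  obtain ⟨hi_pos, hin⟩ := Finset.mem_Icc.mp hi
  rw [dQ_eq_div k hi, mul_div_assoc', div_eq_iff (by positivity)]
  obtain ⟨a, rfl⟩ := Nat.exists_eq_add_of_le' hi_pos
  obtain ⟨m, rfl⟩ := Nat.exists_eq_add_of_le' (hi_pos.trans hin)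
  exact_mod_cast choose_mul_succ_mul_choose_succ k m a

theorem exists_natCast_eq_choose_mul_abs_dQ_sub (hi : i ∈ Finset.Icc 1 n) (d : ℤ) :
    ∃ m : ℕ, (m : ℚ) = (n - 1).choose (i - 1) * |dQ n k i - d| := by
  let z : ℤ := ((k + n).choose (k + i) * (k + (i - 1)).choose k : ℕ) -
    (n - 1).choose (i - 1) * d
  have hz : (z : ℚ) = (n - 1).choose (i - 1) * (dQ n k i - d) := by
    rw [mul_sub, choose_mul_dQ k hi, Int.cast_sub, Int.cast_natCast, Int.cast_mul,
      Int.cast_natCast]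
  exact ⟨z.natAbs, by rw [Nat.cast_natAbs, Int.cast_abs, hz, abs_mul, Nat.abs_cast]⟩

end dQ

theorem stmt_8 (n k₀ : ℕ) (hn : 3 ≤ n) (hk : 1 ≤ k₀) (d : ℤ)
    (hd₁ : (c n k₀ : ℤ) ≤ d) (hd₂ : d < (c n (k₀ + 1) : ℤ)) :
    (∃! i₀ : ℕ, 1 ≤ i₀ ∧ i₀ ≤ n - 1 ∧
        dQ n k₀ (i₀ + 1) ≤ (d : ℚ) ∧ (d : ℚ) < dQ n k₀ i₀) ∧
    (∀ i₀ : ℕ, 1 ≤ i₀ → i₀ ≤ n - 1 →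
        dQ n k₀ (i₀ + 1) ≤ (d : ℚ) → (d : ℚ) < dQ n k₀ i₀ →
      ∀ i ∈ Finset.Icc 1 n,
        (∃ m : ℕ,
          (if i ≤ i₀ then ((n - 1).choose (i - 1) : ℚ) * (dQ n k₀ i - (d : ℚ))
            else ((n - 1).choose (i - 1) : ℚ) * ((d : ℚ) - dQ n k₀ i)) = (m : ℚ)) ∧
        (i ≤ i₀ →
          0 < ((n - 1).choose (i - 1) : ℚ) * (dQ n k₀ i - (d : ℚ))) ∧
        (i₀ + 1 < i →
          0 < ((n - 1).choose (i - 1) : ℚ) * ((d : ℚ) - dQ n k₀ i))) := by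
  have hanti := strictAntiOn_dQ k₀ n
  have hd : (d : ℚ) ∈ Set.Ico (dQ n k₀ n) (dQ n k₀ 1) := by
    rw [dQ_self k₀ (by lia), dQ_one k₀ (by lia)]
    exact ⟨mod_cast hd₁, mod_cast hd₂⟩
  refine ⟨?_, fun i₀ hi₀ hi₀n hle hlt i hi => ?_⟩
  · simpa only [Nat.lt_iff_le_pred (show 0 < n by lia)] using
      existsUnique_apply_succ_le_lt_apply hanti.antitoneOn (by lia) hd
  · have hi' := Finset.mem_Icc.mp hi
    have hchoose : (0 : ℚ) < (n - 1).choose (i - 1) := mod_cast Nat.choose_pos (by lia)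
    have hsign : (d : ℚ) < dQ n k₀ i ↔ i ≤ i₀ :=
      lt_apply_iff_le_of_antitoneOn_Icc hanti.antitoneOn hi₀ (by lia) hle hlt hi'
    refine ⟨?_, fun h => mul_pos hchoose (sub_pos.mpr (hsign.mpr h)), fun h =>
      mul_pos hchoose (sub_pos.mpr ((hanti ⟨by lia, by lia⟩ hi' h).trans_le hle))⟩
    obtain ⟨m, hm⟩ := exists_natCast_eq_choose_mul_abs_dQ_sub k₀ hi d
    refine ⟨m, ?_⟩
    split_ifs with h
    · rw [hm, abs_of_pos (sub_pos.mpr (hsign.mpr h))]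
    · rw [hm, abs_of_nonpos (sub_nonpos.mpr (not_lt.mp (hsign.not.mpr h))), neg_sub]
end

section
/- For all integers n ≥ 3, k₀ ≥ 1 and 1 ≤ i ≤ n−1, one has binom(n−1, i−1)·(dᵢ − c(n,k₀)) = binom(k₀+n−1, k₀+i)·binom(k₀+i−1, i−1), where dᵢ := (1/(n−1)!)·Π_{1 ≤ j ≤ n, j ≠ i}(k₀+j) and c(n,k₀) := binom(n−1+k₀, k₀). -/
/-!
Completing the punctured product gives `(k₀ + i) dᵢ = (k₀ + n) c(n, k₀)`, and hence
`(k₀ + i) (dᵢ - c(n, k₀)) = (n - i) c(n, k₀)`. After multiplication by `k₀ + i`, both sides of the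
identity equal `n - i` times the multinomial coefficient
`(k₀ + n - 1)! / (k₀! (i - 1)! (n - i)!)`.
-/

theorem prod_Icc_add_eq_ascFactorial (k n : ℕ) :
    ∏ j ∈ Finset.Icc 1 n, (k + j) = (k + 1).ascFactorial n := by
  induction n with
  | zero => simp
  | succ n ih =>
    rw [Finset.prod_Icc_succ_top (by lia), ih, Nat.ascFactorial_succ]
    ring

theorem add_mul_dQ {n k i : ℕ} (hi : i ∈ Finset.Icc 1 n) :
    ((k : ℚ) + i) * dQ n k i = (k + n) * c n k := by
  obtain ⟨m, rfl⟩ : ∃ m, n = m + 1 := Nat.exists_eq_add_one.mpr (by grind)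
  have prod_eq : ∏ j ∈ Finset.Icc 1 (m + 1), (k + j)
      = (k + (m + 1)) * (m.factorial * c (m + 1) k) := by
    rw [prod_Icc_add_eq_ascFactorial, Nat.ascFactorial_succ,
      Nat.ascFactorial_eq_factorial_mul_choose, ← Nat.choose_symm_add, c, Nat.add_sub_cancel,
      add_comm m k]
    ring
  have hfact : (m.factorial : ℚ) ≠ 0 := by positivity
  calc ((k : ℚ) + i) * dQ (m + 1) k i
      = 1 / m.factorial * ∏ j ∈ Finset.Icc 1 (m + 1), ((k : ℚ) + j) := by
        rw [dQ, Nat.add_sub_cancel, ← Finset.mul_prod_erase _ _ hi]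
        ring
    _ = 1 / m.factorial * ((k + (m + 1 : ℕ)) * (m.factorial * c (m + 1) k)) := by
        norm_cast
        rw [prod_eq]
    _ = (k + (m + 1 : ℕ)) * c (m + 1) k := by field_simp

theorem add_mul_dQ_sub_c {n k i : ℕ} (hi : i ∈ Finset.Icc 1 n) :
    ((k : ℚ) + i) * (dQ n k i - c n k) = (n - i) * c n k := by
  linear_combination add_mul_dQ (k := k) hi

theorem choose_add_succ_mul_choose_mul_succ (k m a : ℕ) :
    (k + m).choose (k + a + 1) * (k + a).choose a * (k + a + 1)
      = m.choose a * (k + m).choose k * (m - a) := by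
  have trinomial_revision :
      (k + m).choose (k + a) * (k + a).choose a = (k + m).choose k * m.choose a := by
    rw [← Nat.choose_symm_add, Nat.choose_mul (Nat.le_add_right k a), Nat.add_sub_cancel_left,
      Nat.add_sub_cancel_left]
  calc (k + m).choose (k + a + 1) * (k + a).choose a * (k + a + 1)
      = (k + m).choose (k + a + 1) * (k + a + 1) * (k + a).choose a := by ring
    _ = (k + m).choose (k + a) * (k + a).choose a * (m - a) := by
        rw [Nat.choose_succ_right_eq, Nat.add_sub_add_left]
        ring
    _ = m.choose a * (k + m).choose k * (m - a) := by
        rw [trinomial_revision, mul_comm (m.choose a)]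

theorem choose_mul_choose_mul_add {n k i : ℕ} (hi : i ∈ Finset.Icc 1 n) :
    ((k + n - 1).choose (k + i) : ℚ) * (k + i - 1).choose (i - 1) * (k + i)
      = (n - 1).choose (i - 1) * c n k * (n - i) := by
  obtain ⟨h1i, hin⟩ := Finset.mem_Icc.mp hi
  rw [← Nat.cast_sub hin]
  norm_cast
  obtain ⟨a, rfl⟩ := Nat.exists_eq_add_of_le' h1i
  obtain ⟨m, rfl⟩ := Nat.exists_eq_add_of_le' (h1i.trans hin)
  simpa [c, ← add_assoc, add_comm m k] using choose_add_succ_mul_choose_mul_succ k m a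

theorem stmt_9 (n k₀ i : ℕ) (hn : 3 ≤ n) (hk : 1 ≤ k₀) (hi1 : 1 ≤ i) (hin : i ≤ n - 1) :
    ((n - 1).choose (i - 1) : ℚ) * (dQ n k₀ i - (c n k₀ : ℚ))
      = ((k₀ + n - 1).choose (k₀ + i) : ℚ) * ((k₀ + i - 1).choose (i - 1) : ℚ) := by
  have hi : i ∈ Finset.Icc 1 n := Finset.mem_Icc.mpr ⟨hi1, by lia⟩
  have hpos : (k₀ : ℚ) + i ≠ 0 := by positivity
  apply mul_right_cancel₀ hpos
  calc ((n - 1).choose (i - 1) : ℚ) * (dQ n k₀ i - c n k₀) * (k₀ + i)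
      = (n - 1).choose (i - 1) * c n k₀ * (n - i) := by
        linear_combination ((n - 1).choose (i - 1) : ℚ) * add_mul_dQ_sub_c (k := k₀) hi
    _ = (k₀ + n - 1).choose (k₀ + i) * (k₀ + i - 1).choose (i - 1) * (k₀ + i) :=
        (choose_mul_choose_mul_add hi).symm
end
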